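/- arXiv:1004.0909 — 4 statements merged into one kernel-verified Lean document; each statement's English description precedes it below -/
import Mathlib

section
/- Let n ≥ 1, let F : ℝⁿ → ℝ be continuously differentiable, let c ∈ ℝ with c ≠ 0, and let u : ℝ → ℝⁿ be twice differentiable and satisfy u''(x) + c·u'(x) + ∇F(u(x)) = 0 for all x ∈ ℝ. If u is periodic, i.e. there exists X > 0 with u(x + X) = u(x) for all x ∈ ℝ, then u is constant. -/
/-!
The energy `E = ‖u'‖² / 2 + F ∘ u` satisfies `E' = ⟪u', u'' + ∇F(u)⟫ = -c ‖u'‖²` along solutions.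
Hence `-c E` has derivative `c² ‖u'‖² ≥ 0`, so it is monotone; it is also periodic, and a monotone
periodic function is constant. Its derivative therefore vanishes, and `c ≠ 0` forces `u' = 0`.
-/

lemma monotone_periodic_eq {G : ℝ → ℝ} (hG : Monotone G) {X : ℝ} (hX : 0 < X)
    (hper : Function.Periodic G X) (x y : ℝ) : G x = G y := by
  have key : ∀ a b, G a ≤ G b := fun a b => by
    obtain ⟨z, hz, hbz⟩ := hper.exists_mem_Ico hX b a
    exact hbz ▸ hG hz.1
  exact le_antisymm (key x y) (key y x)

/-- In the variational (Allen–Cahn) case `f = ∇F`, any periodic solution of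
the profile ODE `u'' + c u' + ∇F(u) = 0` with nonzero speed `c` must be constant. -/
theorem periodic_implies_constant_nonzero_speed
    (n : ℕ) (hn : 1 ≤ n)
    (F : EuclideanSpace ℝ (Fin n) → ℝ) (hF : ContDiff ℝ 1 F)
    (c : ℝ) (hc : c ≠ 0)
    (u u' u'' : ℝ → EuclideanSpace ℝ (Fin n))
    (hu : ∀ x : ℝ, HasDerivAt u (u' x) x)
    (hu' : ∀ x : ℝ, HasDerivAt u' (u'' x) x)
    (hode : ∀ x : ℝ, u'' x + c • u' x + gradient F (u x) = 0)
    (X : ℝ) (hX : 0 < X) (hper : ∀ x : ℝ, u (x + X) = u x) :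
    ∀ x y : ℝ, u x = u y := by
  have hper' : ∀ x, u' (x + X) = u' x := fun x => by
    have h := (hu (x + X)).comp_add_const x X
    simp only [hper] at h
    exact h.unique (hu x)
  have hFu : ∀ x, HasDerivAt (fun t => F (u t)) (inner ℝ (gradient F (u x)) (u' x)) x := fun x => by
    have hg := ((hF.differentiable one_ne_zero) (u x)).hasGradientAt.hasFDerivAt
    exact hg.comp_hasDerivAt x (hu x)
  have hG : ∀ x, HasDerivAt (fun t => -c * (inner ℝ (u' t) (u' t) / 2 + F (u t)))
      (c ^ 2 * inner ℝ (u' x) (u' x)) x := fun x => by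
    have h := (((((hu' x).inner ℝ (hu' x)).div_const 2).add (hFu x)).const_mul (-c))
    refine h.congr_deriv ?_
    have ho : inner ℝ (u'' x + c • u' x + gradient F (u x)) (u' x) = 0 := by
      rw [hode x, inner_zero_left]
    rw [inner_add_left, inner_add_left, real_inner_smul_left] at ho
    rw [real_inner_comm (u'' x) (u' x)]
    linear_combination (-c) * ho
  have hmono : Monotone (fun t => -c * (inner ℝ (u' t) (u' t) / 2 + F (u t))) :=
    monotone_of_hasDerivAt_nonneg hG
      (fun x => mul_nonneg (sq_nonneg c) real_inner_self_nonneg)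
  have hconst := monotone_periodic_eq hmono hX (fun x => by simp only [hper, hper'])
  have hzero : ∀ x, u' x = 0 := fun x => by
    have h0 : c ^ 2 * inner ℝ (u' x) (u' x) = 0 :=
      (hG x).unique ((hasDerivAt_const x _).congr_of_eventuallyEq
        (Filter.Eventually.of_forall fun t => hconst t x))
    exact inner_self_eq_zero.mp ((mul_eq_zero.mp h0).resolve_left (pow_ne_zero 2 hc))
  exact is_const_of_deriv_eq_zero (fun x => (hu x).differentiableAt)
    (fun x => (hu x).deriv.trans (hzero x))
end

section
/- Let g : ℝ → ℂ be a Schwartz function and define ĝ(ξ) := ∫_ℝ g(x) e^{−iξx} dx. Then the Bloch–Fourier transform is an isometry up to normalization: ∫_ℝ |g(x)|² dx = (1/2π) ∫_{−π}^{π} ∫_0^1 | Σ_{j∈ℤ} e^{2πijx} ĝ(ξ+2πj) |² dx dξ. -/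
/-!
Two Parseval identities are composed. For fixed `ξ` the samples `ĝ(ξ + 2πj)` are absolutely summable,
so the Bloch–Fourier transform is a uniformly convergent Fourier series on the circle whose
coefficients are these samples; Parseval on the circle (`integral_norm_sq_tsum_exp`) turns the inner
integral into `∑ⱼ |ĝ(ξ + 2πj)|²`. Integrating this over one period of length `2π` tiles the real
line (`integral_tsum_comp_add_int`), which gives `∫ |ĝ|²`, and Plancherel's theorem for Schwartz
functions finishes the proof. Mathlib's transform `𝓕` uses the frequency variable `ξ / 2π`, which is
where the factor `1 / 2π` comes from.
-/
open Complex MeasureTheory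

/-- The Fourier transform `ĝ(ξ) = ∫ g(x) e^{-iξx} dx`. -/
noncomputable def fourierTransf (g : SchwartzMap ℝ ℂ) (ξ : ℝ) : ℂ :=
  ∫ x : ℝ, g x * Complex.exp (-(Complex.I * ξ * x))

open scoped FourierTransform

/-- Conversion between the angular-frequency convention and Mathlib's Fourier transform. -/
lemma fourierTransf_eq (g : SchwartzMap ℝ ℂ) (ξ : ℝ) :
    fourierTransf g ξ = (𝓕 g : SchwartzMap ℝ ℂ) (ξ / (2 * Real.pi)) := by
  rw [SchwartzMap.fourier_coe, Real.fourier_real_eq_integral_exp_smul, fourierTransf]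
  refine integral_congr_ae (.of_forall fun x ↦ ?_)
  have hπ : (Real.pi : ℂ) ≠ 0 := by exact_mod_cast Real.pi_ne_zero
  simp only [smul_eq_mul]
  rw [mul_comm]
  congr 2
  push_cast
  field_simp

lemma summable_norm_comp_add_int (G : SchwartzMap ℝ ℂ) (s : ℝ) :
    Summable fun j : ℤ ↦ ‖G (s + j)‖ := by
  have h := (SchwartzMap.isBigO_cocompact_rpow (G.compSubConstCLM ℂ (-s)) (-2)).comp_tendsto
    Int.tendsto_coe_cofinite
  have h2 := summable_of_isBigO (Real.summable_abs_int_rpow one_lt_two) h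
  simpa [Function.comp_def, add_comm] using h2.norm

/-- Parseval's identity for a Fourier series with absolutely summable coefficients. -/
lemma integral_norm_sq_tsum_exp (a : ℤ → ℂ) (ha : Summable fun j ↦ ‖a j‖) :
    ∫ x in (0 : ℝ)..1, ‖∑' j : ℤ, Complex.exp (2 * Real.pi * Complex.I * j * x) * a j‖ ^ 2
      = ∑' j, ‖a j‖ ^ 2 := by
  have hs : Summable fun j : ℤ ↦ a j • (fourier j : C(UnitAddCircle, ℂ)) := by
    refine .of_norm ?_
    simpa only [norm_smul, fourier_norm, mul_one] using ha
  obtain ⟨F, hF⟩ := hs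
  have hF2 : HasSum (fun j ↦ a j • fourierBasis (T := 1) j)
      (ContinuousMap.toLp (E := ℂ) 2 AddCircle.haarAddCircle ℂ F) := by
    rw [coe_fourierBasis]
    simpa [Function.comp_def] using
      (ContinuousMap.toLp (E := ℂ) 2 AddCircle.haarAddCircle ℂ).hasSum hF
  -- the coefficients are read off by pairing the `L²`-convergent series with the orthonormal basis
  have hcoeff (i : ℤ) : fourierCoeff
      (ContinuousMap.toLp (E := ℂ) 2 AddCircle.haarAddCircle ℂ F) i = a i := by
    rw [← fourierBasis_repr, HilbertBasis.repr_apply_apply]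
    have h1 := (innerSL ℂ (fourierBasis (T := 1) i)).hasSum hF2
    have h2 : HasSum (fun j ↦ innerSL ℂ (fourierBasis (T := 1) i) (a j • fourierBasis (T := 1) j))
        (a i) := by
      have hb := orthonormal_iff_ite.1 (fourierBasis (T := 1)).orthonormal i
      convert! hasSum_ite_eq i (a i) using 2 with j
      rw [innerSL_apply_apply, inner_smul_right, hb]
      by_cases hij : j = i
      · simp [hij]
      · simp [hij, Ne.symm hij]
    exact h1.unique h2
  have hP := tsum_sq_fourierCoeff (ContinuousMap.toLp (E := ℂ) 2 AddCircle.haarAddCircle ℂ F)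
  simp only [hcoeff] at hP
  have hpt (x : ℝ) : ∑' j : ℤ, Complex.exp (2 * Real.pi * Complex.I * j * x) * a j
      = F (x : UnitAddCircle) := by
    refine HasSum.tsum_eq ?_
    have h := (ContinuousMap.evalCLM ℂ (x : UnitAddCircle)).hasSum hF
    simpa [Function.comp_def, mul_comm] using h
  have hae : ∫ t, ‖(ContinuousMap.toLp (E := ℂ) 2 AddCircle.haarAddCircle ℂ F) t‖ ^ 2
      ∂AddCircle.haarAddCircle = ∫ t, ‖F t‖ ^ 2 ∂(AddCircle.haarAddCircle (T := 1)) := by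
    refine integral_congr_ae ?_
    filter_upwards [ContinuousMap.coeFn_toLp (p := 2) (𝕜 := ℂ) AddCircle.haarAddCircle F] with t ht
    rw [ht]
  simp only [hpt]
  rw [hP, hae, AddCircle.integral_haarAddCircle, inv_one, one_smul,
    ← UnitAddCircle.intervalIntegral_preimage 0, zero_add]

/-- Integrating the periodization of a nonnegative function over a period recovers its integral. -/
lemma integral_tsum_comp_add_int (f : ℝ → ℝ) (hf : Integrable f) (h0 : ∀ x, 0 ≤ f x) (y : ℝ) :
    ∫ s in y..y + 1, ∑' j : ℤ, f (s + j) = ∫ x, f x := by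
  have hsum : HasSum (fun j : ℤ ↦ ∫ s in y..y + 1, f (s + j)) (∫ x, f x) := by
    simpa only [intervalIntegral.integral_comp_add_right, add_right_comm y 1] using
      hf.hasSum_intervalIntegral y
  rw [← hsum.tsum_eq]
  simp only [intervalIntegral.integral_of_le (le_add_of_nonneg_right zero_le_one : y ≤ y + 1)]
    at hsum ⊢
  refine (integral_tsum_of_summable_integral_norm
    (F := fun (j : ℤ) s ↦ f (s + j)) (fun j ↦ (hf.comp_add_right (j : ℝ)).integrableOn) ?_).symm
  simpa only [Real.norm_of_nonneg (h0 _)] using hsum.summable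

/-- Parseval identity for the Bloch–Fourier transform:
`∫_ℝ |g|² = (1/2π) ∫_{-π}^{π} ∫_0^1 |Σ_{j∈ℤ} e^{2πijx} ĝ(ξ+2πj)|² dx dξ`. -/
theorem bloch_fourier_parseval (g : SchwartzMap ℝ ℂ) :
    ∫ x : ℝ, ‖g x‖ ^ 2 =
      (1 / (2 * Real.pi)) *
        ∫ ξ in (-Real.pi)..Real.pi,
          ∫ x in (0 : ℝ)..1,
            ‖∑' j : ℤ,
                Complex.exp (2 * Real.pi * Complex.I * j * x) *
                  fourierTransf g (ξ + 2 * Real.pi * j)‖ ^ 2 := by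
  have hπ : (2 * Real.pi) ≠ 0 := by positivity
  set G : SchwartzMap ℝ ℂ := 𝓕 g with hG
  have hshift (ξ : ℝ) (j : ℤ) :
      fourierTransf g (ξ + 2 * Real.pi * j) = G (ξ / (2 * Real.pi) + j) := by
    rw [fourierTransf_eq, add_div, mul_div_cancel_left₀ _ hπ]
  simp only [hshift]
  have hinner (ξ : ℝ) := integral_norm_sq_tsum_exp (fun j : ℤ ↦ G (ξ / (2 * Real.pi) + j))
    (summable_norm_comp_add_int G _)
  simp only [hinner]
  have hint : Integrable fun x ↦ ‖G x‖ ^ 2 := (G.memLp 2).integrable_norm_pow two_ne_zero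
  have hper := integral_tsum_comp_add_int (fun x ↦ ‖G x‖ ^ 2) hint (fun x ↦ by positivity) (-1 / 2)
  rw [intervalIntegral.integral_comp_div (fun s ↦ ∑' j : ℤ, ‖G (s + j)‖ ^ 2) hπ,
    show -Real.pi / (2 * Real.pi) = -1 / 2 by field_simp,
    show Real.pi / (2 * Real.pi) = -1 / 2 + 1 by field_simp; norm_num, hper, smul_eq_mul,
    one_div, inv_mul_cancel_left₀ hπ, hG, SchwartzMap.integral_norm_sq_fourier]
end

section
/- Let θ > 0, R > 0, M > 0, and m ∈ ℕ. Let μ : [−R, R] → ℂ and h : [−R, R] → ℂ be measurable functions with Re μ(ξ) ≤ −θξ² and |h(ξ)| ≤ M·|ξ|^m for all ξ ∈ [−R, R]. Then there exists a constant C > 0, depending only on θ, R, M, m, such that for all t ≥ 0 and all z ∈ ℝ: | ∫_{−R}^{R} e^{iξz} e^{μ(ξ)t} h(ξ) dξ | ≤ C·(1+t)^{−(m+1)/2}. -/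
/-!
The phase `e^{iξz}` has modulus one, so the integrand is at most `M |ξ|^m e^{-θξ²t}` in norm.
On `[-R, R]` we have `e^{-θξ²t} ≤ e^{θR²} e^{-θ(1+t)ξ²}`, which treats small and large times at
once. Extending the integral to the whole line and rescaling `y = (1+t)^{1/2} ξ` turns
`∫ |ξ|^m e^{-θ(1+t)ξ²} dξ` into `(1+t)^{-(m+1)/2} ∫ |y|^m e^{-θy²} dy`, a finite Gaussian moment
(`integrable_gaussMoment`, `integral_gaussMoment_scaled`).
-/

open Set

/-- The integrand `|y|^m e^{-θy²}` of the absolute Gaussian moment of order `m`. -/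
noncomputable def gaussMoment (θ : ℝ) (m : ℕ) (y : ℝ) : ℝ :=
  |y| ^ m * Real.exp (-θ * y ^ 2)

lemma gaussMoment_nonneg (θ : ℝ) (m : ℕ) (y : ℝ) : 0 ≤ gaussMoment θ m y := by
  unfold gaussMoment; positivity

lemma integrable_gaussMoment {θ : ℝ} (hθ : 0 < θ) (m : ℕ) :
    MeasureTheory.Integrable (gaussMoment θ m) := by
  have hm : (-1 : ℝ) < (m : ℝ) := by
    have : (0 : ℝ) ≤ m := Nat.cast_nonneg m
    linarith
  refine (integrable_rpow_mul_exp_neg_mul_sq hθ hm).norm.congr (Filter.Eventually.of_forall ?_)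
  intro x
  simp [gaussMoment, Real.rpow_natCast]

lemma integral_gaussMoment_scaled (θ : ℝ) (m : ℕ) {s : ℝ} (hs : 0 < s) :
    ∫ ξ : ℝ, gaussMoment θ m (√s * ξ) =
      (√s)⁻¹ * ∫ y : ℝ, gaussMoment θ m y := by
  rw [MeasureTheory.Measure.integral_comp_mul_left (gaussMoment θ m) (√s),
    abs_of_nonneg (by positivity), smul_eq_mul]

lemma inv_sqrt_pow_eq_rpow (m : ℕ) {s : ℝ} (hs : 0 < s) :
    ((√s) ^ m)⁻¹ * (√s)⁻¹ = s ^ (-(((m : ℝ) + 1) / 2)) := by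
  rw [← mul_inv, ← pow_succ, Real.sqrt_eq_rpow, ← Real.rpow_natCast, ← Real.rpow_mul hs.le,
    ← Real.rpow_neg hs.le]
  congr 1
  push_cast
  ring

/-- Pointwise bound of the kernel by a rescaled Gaussian moment; the factor `e^{θR²}` pays for
replacing `t` by `1 + t` in the exponent. -/
lemma norm_kernel_le {θ R M : ℝ} (hθ : 0 < θ) (hM : 0 < M) (m : ℕ) {t : ℝ} (ht : 0 ≤ t)
    (z : ℝ) {ξ : ℝ} (hξ : ξ ∈ Icc (-R) R) {a b : ℂ} (ha : a.re ≤ -θ * ξ ^ 2)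
    (hb : ‖b‖ ≤ M * |ξ| ^ m) :
    ‖Complex.exp (Complex.I * ξ * z) * Complex.exp (a * t) * b‖ ≤
      M * Real.exp (θ * R ^ 2) * ((√(1 + t)) ^ m)⁻¹ * gaussMoment θ m (√(1 + t) * ξ) := by
  have hs : 0 < 1 + t := by linarith
  have h1 : ‖Complex.exp (Complex.I * ξ * z)‖ = 1 := by
    rw [Complex.norm_exp]; simp
  have h2 : ‖Complex.exp (a * t)‖ ≤ Real.exp (θ * R ^ 2) * Real.exp (-θ * ((1 + t) * ξ ^ 2)) := by
    rw [Complex.norm_exp, ← Real.exp_add, Real.exp_le_exp, Complex.re_mul_ofReal]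
    have h3 : a.re * t ≤ -θ * ξ ^ 2 * t := mul_le_mul_of_nonneg_right ha ht
    have h4 : θ * ξ ^ 2 ≤ θ * R ^ 2 :=
      mul_le_mul_of_nonneg_left (sq_le_sq' hξ.1 hξ.2) hθ.le
    linarith
  have hp : (√(1 + t)) ^ m ≠ 0 := by positivity
  calc ‖Complex.exp (Complex.I * ξ * z) * Complex.exp (a * t) * b‖
      = ‖Complex.exp (a * t)‖ * ‖b‖ := by rw [norm_mul, norm_mul, h1, one_mul]
    _ ≤ (Real.exp (θ * R ^ 2) * Real.exp (-θ * ((1 + t) * ξ ^ 2))) * (M * |ξ| ^ m) := by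
        gcongr
    _ = _ := by
        rw [gaussMoment, abs_mul, abs_of_nonneg (Real.sqrt_nonneg _), mul_pow, mul_pow,
          Real.sq_sqrt hs.le]
        field_simp

/-- Uniform (L^∞ in space) bound for low-frequency oscillatory Green-kernel
integrals: if `Re μ(ξ) ≤ -θξ²` and `|h(ξ)| ≤ M|ξ|^m` on `[-R, R]`, then
`|∫_{-R}^{R} e^{iξz} e^{μ(ξ)t} h(ξ) dξ| ≤ C (1+t)^{-(m+1)/2}` uniformly in `z`,
with `C` depending only on `θ, R, M, m`. -/
theorem oscillatory_kernel_sup_bound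
    (θ R M : ℝ) (hθ : 0 < θ) (hR : 0 < R) (hM : 0 < M) (m : ℕ) :
    ∃ C : ℝ, 0 < C ∧
      ∀ (μ h : ℝ → ℂ), Measurable μ → Measurable h →
        (∀ ξ ∈ Icc (-R) R, (μ ξ).re ≤ -θ * ξ ^ 2) →
        (∀ ξ ∈ Icc (-R) R, ‖h ξ‖ ≤ M * |ξ| ^ m) →
        ∀ t : ℝ, 0 ≤ t → ∀ z : ℝ,
          ‖∫ ξ in (-R)..R,
              Complex.exp (Complex.I * ξ * z) * Complex.exp (μ ξ * t) * h ξ‖ ≤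
            C * (1 + t) ^ (-(((m : ℝ) + 1) / 2)) := by
  have hJ : 0 ≤ ∫ y : ℝ, gaussMoment θ m y :=
    MeasureTheory.integral_nonneg (gaussMoment_nonneg θ m)
  -- Adding `1` to the moment gives a positive constant without showing that the moment is nonzero.
  refine ⟨M * Real.exp (θ * R ^ 2) * ((∫ y : ℝ, gaussMoment θ m y) + 1), by positivity, ?_⟩
  intro μ h _ _ hμ hh t ht z
  have hs : 0 < 1 + t := by linarith
  have hRR : -R ≤ R := by linarith
  set K := M * Real.exp (θ * R ^ 2) with hK
  have hK0 : 0 ≤ K := by positivity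
  have hint : MeasureTheory.Integrable
      (fun ξ : ℝ => K * ((√(1 + t)) ^ m)⁻¹ * gaussMoment θ m (√(1 + t) * ξ)) :=
    ((integrable_gaussMoment hθ m).comp_mul_left' (Real.sqrt_pos.2 hs).ne').const_mul _
  calc ‖∫ ξ in (-R)..R, Complex.exp (Complex.I * ξ * z) * Complex.exp (μ ξ * t) * h ξ‖
      ≤ ∫ ξ in (-R)..R, K * ((√(1 + t)) ^ m)⁻¹ * gaussMoment θ m (√(1 + t) * ξ) := by
        refine intervalIntegral.norm_integral_le_of_norm_le hRR
          (Filter.Eventually.of_forall fun ξ hξ => ?_) hint.intervalIntegrable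
        have hξ' : ξ ∈ Icc (-R) R := Ioc_subset_Icc_self hξ
        exact norm_kernel_le hθ hM m ht z hξ' (hμ ξ hξ') (hh ξ hξ')
    _ ≤ ∫ ξ : ℝ, K * ((√(1 + t)) ^ m)⁻¹ * gaussMoment θ m (√(1 + t) * ξ) := by
        rw [intervalIntegral.integral_of_le hRR]
        refine MeasureTheory.setIntegral_le_integral hint (Filter.Eventually.of_forall fun ξ => ?_)
        exact mul_nonneg (by positivity) (gaussMoment_nonneg _ _ _)
    _ = K * (∫ y : ℝ, gaussMoment θ m y) * (1 + t) ^ (-(((m : ℝ) + 1) / 2)) := by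
        rw [MeasureTheory.integral_const_mul, integral_gaussMoment_scaled θ m hs,
          ← inv_sqrt_pow_eq_rpow m hs]
        ring
    _ ≤ K * ((∫ y : ℝ, gaussMoment θ m y) + 1) * (1 + t) ^ (-(((m : ℝ) + 1) / 2)) := by
        gcongr
        linarith
end

section
/- Let θ > 0, R > 0, M > 0, and m ∈ ℕ. Let μ : [−R, R] → ℂ and h : [−R, R] → ℂ be measurable functions with Re μ(ξ) ≤ −θξ² and |h(ξ)| ≤ M·|ξ|^m for all ξ ∈ [−R, R]. For t ≥ 0 define K_t : ℝ → ℂ by K_t(z) := ∫_{−R}^{R} e^{iξz} e^{μ(ξ)t} h(ξ) dξ. Then there exists a constant C > 0, depending only on θ, R, M, m, such that for all t ≥ 0: ( ∫_ℝ |K_t(z)|² dz )^{1/2} ≤ C·(1+t)^{−(2m+1)/4}. -/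
/-!
The kernel `K_t` is, up to the dilation `z ↦ -z / (2π)`, the Fourier transform of the bounded,
compactly supported function `G(ξ) = 1_{(-R, R]}(ξ) e^{μ(ξ)t} h(ξ)`. Plancherel's theorem thus gives
`‖K_t‖² = 2π ‖G‖²`, and the hypotheses on `μ` and `h` give
`|G(ξ)|² ≤ M² |ξ|^{2m} e^{-2θξ²t} ≤ M² e^{2θR²} |ξ|^{2m} e^{-2θξ²(1+t)}`, where replacing `t` by
`1 + t` costs only the factor `e^{2θR²}` because `|ξ| ≤ R`. Rescaling `ξ` by `(1+t)^{1/2}` shows that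
the integral of the right-hand side over `ℝ` is a constant times `(1+t)^{-(2m+1)/2}`.

Mathlib defines the Fourier transform on `L²` by density, so `fourier_ae_eq_fourier_toLp`
identifies it with the Fourier integral for functions in `L¹ ∩ L²`: both represent the same
tempered distribution.
-/

open Set

open MeasureTheory FourierTransform

/-- On `L¹ ∩ L²` the Fourier integral represents the `L²` Fourier transform: by self-adjointness of
the Fourier transform, both have the same pairing with every test function. -/
lemma fourier_ae_eq_fourier_toLp {G : ℝ → ℂ} (h1 : Integrable G) (h2 : MemLp G 2) :
    𝓕 G =ᵐ[volume] (𝓕 (h2.toLp G) : Lp ℂ 2 (volume : Measure ℝ)) := by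
  have hcont : Continuous (𝓕 G) :=
    VectorFourier.fourierIntegral_continuous Real.continuous_fourierChar
      (L := innerₗ ℝ) continuous_inner h1
  refine ae_eq_of_integral_contDiff_smul_eq hcont.locallyIntegrable
    ((Lp.memLp _).locallyIntegrable (by norm_num)) fun g hg hgs => ?_
  have hgs' : HasCompactSupport fun x => (g x : ℂ) := hgs.comp_left (g := Complex.ofReal) rfl
  have hg' : ContDiff ℝ (↑(⊤ : ℕ∞)) fun x => (g x : ℂ) := Complex.ofRealCLM.contDiff.comp hg
  let φ : SchwartzMap ℝ ℂ := hgs'.toSchwartzMap hg'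
  have hφ : ∀ x, φ x = (g x : ℂ) := fun x => rfl
  have key := congrArg (fun T => T φ) (Lp.fourier_toTemperedDistribution_eq (h2.toLp G))
  simp only [TemperedDistribution.fourier_apply, Lp.toTemperedDistribution_apply] at key
  have flip : ∫ x, 𝓕 (φ : ℝ → ℂ) x • G x = ∫ x, φ x • 𝓕 G x := by
    simpa using! VectorFourier.integral_fourierIntegral_smul_eq_flip (L := innerₗ ℝ)
      Real.continuous_fourierChar continuous_inner φ.integrable h1
  have e1 : ∫ x, (𝓕 φ) x • (h2.toLp G) x = ∫ x, 𝓕 (φ : ℝ → ℂ) x • G x := by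
    refine integral_congr_ae ?_
    filter_upwards [h2.coeFn_toLp] with x hx
    rw [hx, SchwartzMap.fourier_coe]
  rw [e1, flip] at key
  simpa [hφ] using key

/-- Plancherel's theorem for the Fourier integral on `L¹ ∩ L²`. -/
lemma integral_norm_sq_fourier_of_memLp {G : ℝ → ℂ} (h1 : Integrable G) (h2 : MemLp G 2) :
    ∫ x, ‖𝓕 G x‖ ^ 2 = ∫ x, ‖G x‖ ^ 2 := by
  have norm_sq (f : Lp ℂ 2 (volume : Measure ℝ)) : ∫ x, ‖f x‖ ^ 2 = ‖f‖ ^ 2 := by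
    have h := L2.inner_def (𝕜 := ℂ) f f
    simp only [inner_self_eq_norm_sq_to_K] at h
    apply Complex.ofReal_injective
    rw [← integral_complex_ofReal]
    simpa using h.symm
  calc ∫ x, ‖𝓕 G x‖ ^ 2
      = ∫ x, ‖(𝓕 (h2.toLp G) : Lp ℂ 2 (volume : Measure ℝ)) x‖ ^ 2 := by
        refine integral_congr_ae ?_
        filter_upwards [fourier_ae_eq_fourier_toLp h1 h2] with x hx
        rw [hx]
    _ = ∫ x, ‖(h2.toLp G) x‖ ^ 2 := by rw [norm_sq, norm_sq, Lp.norm_fourier_eq]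
    _ = ∫ x, ‖G x‖ ^ 2 := by
        refine integral_congr_ae ?_
        filter_upwards [h2.coeFn_toLp] with x hx
        rw [hx]

/-- Plancherel's theorem with the angular-frequency normalisation of the exponential. -/
lemma integral_norm_sq_integral_exp {G : ℝ → ℂ} (h1 : Integrable G) (h2 : MemLp G 2) :
    ∫ z : ℝ, ‖∫ ξ : ℝ, Complex.exp (Complex.I * ξ * z) * G ξ‖ ^ 2
      = 2 * Real.pi * ∫ x, ‖G x‖ ^ 2 := by
  have hK (z : ℝ) : ∫ ξ : ℝ, Complex.exp (Complex.I * ξ * z) * G ξ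
      = 𝓕 G (-(2 * Real.pi)⁻¹ * z) := by
    rw [Real.fourier_real_eq_integral_exp_smul]
    refine integral_congr_ae (.of_forall fun ξ => ?_)
    have : (-2 * Real.pi * ξ * (-(2 * Real.pi)⁻¹ * z) : ℝ) = ξ * z := by
      field_simp
    simp only [this, smul_eq_mul]
    push_cast
    ring_nf
  simp_rw [hK]
  rw [Measure.integral_comp_mul_left (fun z => ‖𝓕 G z‖ ^ 2),
    integral_norm_sq_fourier_of_memLp h1 h2]
  have : |(-(2 * Real.pi)⁻¹)⁻¹| = 2 * Real.pi := by
    rw [inv_neg, inv_inv, abs_neg, abs_of_pos Real.two_pi_pos]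
  rw [this, smul_eq_mul]

lemma integrable_pow_mul_exp_neg_sq {b : ℝ} (hb : 0 < b) (m : ℕ) :
    Integrable fun x : ℝ => x ^ (2 * m) * Real.exp (-b * x ^ 2) := by
  have := integrable_rpow_mul_exp_neg_mul_sq hb (s := ((2 * m : ℕ) : ℝ))
    (by have : (0 : ℝ) ≤ ((2 * m : ℕ) : ℝ) := Nat.cast_nonneg _
        linarith)
  simpa only [Real.rpow_natCast] using this

/-- Scaling law for Gaussian moments. -/
lemma integral_pow_mul_exp_neg_sq_scale (b : ℝ) (m : ℕ) {s : ℝ} (hs : 0 < s) :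
    ∫ x : ℝ, x ^ (2 * m) * Real.exp (-(b * s) * x ^ 2)
      = (∫ x : ℝ, x ^ (2 * m) * Real.exp (-b * x ^ 2)) * s ^ (-((2 * (m : ℝ) + 1) / 2)) := by
  have hq : 0 < √s := Real.sqrt_pos.2 hs
  have hq2 : √s ^ 2 = s := Real.sq_sqrt hs.le
  have h := Measure.integral_comp_mul_left
    (fun x : ℝ => x ^ (2 * m) * Real.exp (-b * x ^ 2)) √s
  have e : ∀ x : ℝ, (√s * x) ^ (2 * m) * Real.exp (-b * (√s * x) ^ 2)
      = s ^ m * (x ^ (2 * m) * Real.exp (-(b * s) * x ^ 2)) := fun x => by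
    rw [mul_pow, pow_mul √s, hq2, mul_pow √s x 2, hq2]
    ring_nf
  simp only [e] at h
  rw [integral_const_mul, abs_of_pos (inv_pos.2 hq), smul_eq_mul] at h
  have hp : s ^ (-((2 * (m : ℝ) + 1) / 2)) = (s ^ m)⁻¹ * (√s)⁻¹ := by
    rw [Real.sqrt_eq_rpow, ← Real.rpow_natCast, ← Real.rpow_neg hs.le, ← Real.rpow_neg hs.le,
      ← Real.rpow_add hs]
    congr 1
    ring
  rw [hp]
  have hsm : s ^ m ≠ 0 := (pow_pos hs m).ne'
  field_simp at h ⊢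
  linarith

/-- The Gaussian moment bound on the frequency side, in squared form. -/
lemma integral_norm_sq_symbol_le {θ R M : ℝ} (hθ : 0 < θ) (hM : 0 < M) {m : ℕ}
    {G : ℝ → ℂ} {t : ℝ} (ht : 0 ≤ t)
    (hG : ∀ ξ ∈ Icc (-R) R, ‖G ξ‖ ≤ Real.exp (-θ * ξ ^ 2 * t) * (M * |ξ| ^ m))
    (hG0 : ∀ ξ ∉ Icc (-R) R, G ξ = 0) :
    ∫ ξ, ‖G ξ‖ ^ 2 ≤ M ^ 2 * Real.exp (2 * θ * R ^ 2) *
      ((∫ x : ℝ, x ^ (2 * m) * Real.exp (-(2 * θ) * x ^ 2)) *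
        (1 + t) ^ (-((2 * (m : ℝ) + 1) / 2))) := by
  have hs : 0 < 1 + t := by linarith
  rw [← integral_pow_mul_exp_neg_sq_scale (2 * θ) m hs, ← integral_const_mul]
  refine integral_mono_of_nonneg (.of_forall fun ξ => by positivity)
    ((integrable_pow_mul_exp_neg_sq (by positivity) m).const_mul _) (.of_forall fun ξ => ?_)
  have hpow : |ξ| ^ (2 * m) = ξ ^ (2 * m) := by rw [pow_mul, pow_mul, sq_abs]
  have hnn : 0 ≤ ξ ^ (2 * m) := by rw [← hpow]; positivity
  by_cases hξ : ξ ∈ Icc (-R) R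
  · have hsq : ξ ^ 2 ≤ R ^ 2 := sq_le_sq' hξ.1 hξ.2
    calc ‖G ξ‖ ^ 2 ≤ (Real.exp (-θ * ξ ^ 2 * t) * (M * |ξ| ^ m)) ^ 2 := by
          gcongr
          exact hG ξ hξ
      _ = M ^ 2 * (ξ ^ (2 * m) * Real.exp (2 * (-θ * ξ ^ 2 * t))) := by
          rw [← hpow, mul_pow, mul_pow, ← pow_mul, ← Real.exp_nat_mul, mul_comm m 2]
          push_cast
          ring
      _ ≤ M ^ 2 * (ξ ^ (2 * m) *
            Real.exp (2 * θ * R ^ 2 + -(2 * θ * (1 + t)) * ξ ^ 2)) := by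
          gcongr
          nlinarith
      _ = _ := by
          rw [Real.exp_add]
          ring
  · simp only [hG0 ξ hξ]
    have : 0 ≤ M ^ 2 * Real.exp (2 * θ * R ^ 2) *
        (ξ ^ (2 * m) * Real.exp (-(2 * θ * (1 + t)) * ξ ^ 2)) := by positivity
    simpa using this



/-- L²-in-space bound for low-frequency oscillatory Green-kernel integrals:
if `Re μ(ξ) ≤ -θξ²` and `|h(ξ)| ≤ M|ξ|^m` on `[-R, R]`, and
`K_t(z) := ∫_{-R}^{R} e^{iξz} e^{μ(ξ)t} h(ξ) dξ`, then
`‖K_t‖_{L²(ℝ)} ≤ C (1+t)^{-(2m+1)/4}`, with `C` depending only on `θ, R, M, m`. -/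
theorem oscillatory_kernel_L2_bound
    (θ R M : ℝ) (hθ : 0 < θ) (hR : 0 < R) (hM : 0 < M) (m : ℕ) :
    ∃ C : ℝ, 0 < C ∧
      ∀ (μ h : ℝ → ℂ), Measurable μ → Measurable h →
        (∀ ξ ∈ Icc (-R) R, (μ ξ).re ≤ -θ * ξ ^ 2) →
        (∀ ξ ∈ Icc (-R) R, ‖h ξ‖ ≤ M * |ξ| ^ m) →
        ∀ t : ℝ, 0 ≤ t →
          (∫ z : ℝ,
              ‖∫ ξ in (-R)..R,
                  Complex.exp (Complex.I * ξ * z) * Complex.exp (μ ξ * t) * h ξ‖ ^ 2) ^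
              ((1 : ℝ) / 2) ≤
            C * (1 + t) ^ (-((2 * (m : ℝ) + 1) / 4)) := by
  set A : ℝ := ∫ x : ℝ, x ^ (2 * m) * Real.exp (-(2 * θ) * x ^ 2) with hA
  have hA0 : 0 ≤ A := integral_nonneg fun x => by
    have : 0 ≤ x ^ (2 * m) := by rw [pow_mul]; positivity
    positivity
  -- `A + 1` instead of `A` makes the constant positive without computing the Gaussian moment.
  set B : ℝ := 2 * Real.pi * (M ^ 2 * Real.exp (2 * θ * R ^ 2) * (A + 1)) with hB
  have hB0 : 0 < B := by positivity
  refine ⟨B ^ ((1 : ℝ) / 2), by positivity, fun μ h hμm hhm hμ hh t ht => ?_⟩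
  have hs : 0 < 1 + t := by linarith
  set g : ℝ → ℂ := fun ξ => Complex.exp (μ ξ * t) * h ξ with hg
  have hgm : Measurable g := by fun_prop
  set G : ℝ → ℂ := (Ioc (-R) R).indicator g with hGdef
  have hgb : ∀ ξ ∈ Icc (-R) R, ‖g ξ‖ ≤ Real.exp (-θ * ξ ^ 2 * t) * (M * |ξ| ^ m) := by
    intro ξ hξ
    rw [hg, norm_mul, Complex.norm_exp, Complex.re_mul_ofReal]
    gcongr
    · exact hμ ξ hξ
    · exact hh ξ hξ
  have hGb : ∀ ξ ∈ Icc (-R) R, ‖G ξ‖ ≤ Real.exp (-θ * ξ ^ 2 * t) * (M * |ξ| ^ m) :=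
    fun ξ hξ => (norm_indicator_le_norm_self _ _).trans (hgb ξ hξ)
  have hG0 : ∀ ξ ∉ Icc (-R) R, G ξ = 0 := fun ξ hξ =>
    indicator_of_notMem (fun hm => hξ (Ioc_subset_Icc_self hm)) _
  have hmem (p : ENNReal) : MemLp G p := by
    rw [hGdef, memLp_indicator_iff_restrict measurableSet_Ioc]
    refine MemLp.of_bound hgm.aestronglyMeasurable (M * R ^ m) ?_
    filter_upwards [ae_restrict_mem measurableSet_Ioc] with ξ hξ
    have hξ' := Ioc_subset_Icc_self hξ
    have hexp : Real.exp (-θ * ξ ^ 2 * t) ≤ 1 := by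
      rw [Real.exp_le_one_iff]
      have : 0 ≤ θ * ξ ^ 2 * t := by positivity
      linarith
    calc ‖g ξ‖ ≤ Real.exp (-θ * ξ ^ 2 * t) * (M * |ξ| ^ m) := hgb ξ hξ'
      _ ≤ 1 * (M * R ^ m) := by
          gcongr
          exact abs_le.2 hξ'
      _ = M * R ^ m := one_mul _
  have hK (z : ℝ) : ∫ ξ in (-R)..R,
        Complex.exp (Complex.I * ξ * z) * Complex.exp (μ ξ * t) * h ξ
      = ∫ ξ : ℝ, Complex.exp (Complex.I * ξ * z) * G ξ := by
    rw [intervalIntegral.integral_of_le (by linarith), ← integral_indicator measurableSet_Ioc]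
    refine integral_congr_ae (.of_forall fun ξ => ?_)
    by_cases hξ : ξ ∈ Ioc (-R) R <;> simp [hGdef, hg, hξ, mul_assoc]
  simp_rw [hK]
  rw [integral_norm_sq_integral_exp (memLp_one_iff_integrable.1 (hmem 1)) (hmem 2)]
  have hbound := integral_norm_sq_symbol_le hθ hM ht hGb hG0
  rw [← hA] at hbound
  have hle : 2 * Real.pi * ∫ x, ‖G x‖ ^ 2 ≤ B * (1 + t) ^ (-((2 * (m : ℝ) + 1) / 2)) := by
    calc 2 * Real.pi * ∫ x, ‖G x‖ ^ 2
        ≤ 2 * Real.pi * (M ^ 2 * Real.exp (2 * θ * R ^ 2) *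
            ((A + 1) * (1 + t) ^ (-((2 * (m : ℝ) + 1) / 2)))) := by
          gcongr
          refine hbound.trans ?_
          gcongr
          linarith
      _ = _ := by rw [hB]; ring
  refine (Real.rpow_le_rpow (by positivity) hle (by norm_num)).trans_eq ?_
  rw [Real.mul_rpow hB0.le (by positivity), ← Real.rpow_mul hs.le]
  congr 2
  ring
end
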